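/- arXiv:1607.01500 — 2 statements merged into one kernel-verified Lean document; each statement's English description precedes it below -/
import Mathlib

section
/- Let χ : ℕ → ℕ be a periodic function (i.e., there exists d ≥ 1 with χ(n + d) = χ(n) for all n) that is not identically zero. Then Σ_{n=0}^∞ χ(n)/n! is irrational. -/
/-!
This is Fourier's argument for the irrationality of `e`. A periodic `χ` is bounded by some `M`, and
it is nonzero beyond every index. Were the sum equal to `q : ℚ`, pick `N > M` with `N ≥ q.den`.
Multiplying by `N!` makes both `q` and the partial sum up to `N` integers, so
`N! * ∑_{n > N} χ n / n!` is an integer. It is positive, and since `N! (N+1)^k ≤ (N+k)!` it is at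
most `M * ∑_{k ≥ 1} (N+1)^{-k} = M / N < 1`: a contradiction.
-/

lemma summable_div_factorial_of_le (χ : ℕ → ℕ) (M : ℕ) (hM : ∀ n, χ n ≤ M) :
    Summable (fun n : ℕ => (χ n : ℝ) / (Nat.factorial n : ℝ)) := by
  have h : Summable (fun n : ℕ => (M : ℝ) * (1 / (Nat.factorial n : ℝ))) := by
    simpa using (Real.summable_pow_div_factorial 1).mul_left (M : ℝ)
  refine Summable.of_nonneg_of_le (fun n => by positivity) (fun n => ?_) h
  rw [mul_one_div]
  have : (χ n : ℝ) ≤ M := by exact_mod_cast hM n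
  gcongr

/-- The scaled tail of the series is at most `M / N`, by comparison with a geometric series. -/
lemma factorial_mul_tail_le (χ : ℕ → ℕ) (M : ℕ) (hM : ∀ n, χ n ≤ M) (N : ℕ) (hN : 0 < N) :
    (Nat.factorial N : ℝ) * ∑' k : ℕ, (χ (k + (N + 1)) : ℝ) / (Nat.factorial (k + (N + 1)) : ℝ)
      ≤ M / N := by
  have hNR : (0 : ℝ) < N := by exact_mod_cast hN
  have hgeo : HasSum (fun k : ℕ => (M : ℝ) / (N + 1) * ((N + 1 : ℝ)⁻¹) ^ k) ((M : ℝ) / N) := by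
    have h := (hasSum_geometric_of_lt_one (r := (N + 1 : ℝ)⁻¹) (by positivity)
      (inv_lt_one_of_one_lt₀ (by linarith))).mul_left ((M : ℝ) / (N + 1))
    have h1 : (1 : ℝ) - (N + 1 : ℝ)⁻¹ = N / (N + 1) := by field_simp; ring
    have h2 : (M : ℝ) / (N + 1) * (1 - (N + 1 : ℝ)⁻¹)⁻¹ = M / N := by rw [h1]; field_simp
    rwa [h2] at h
  have hs := (summable_nat_add_iff (N + 1)).2 (summable_div_factorial_of_le χ M hM)
  rw [← tsum_mul_left, ← hgeo.tsum_eq]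
  refine (hs.mul_left _).tsum_le_tsum (fun k => ?_) hgeo.summable
  have hf : (Nat.factorial N : ℝ) * (N + 1) ^ (k + 1) ≤ (Nat.factorial (k + (N + 1)) : ℝ) := by
    have h := Nat.factorial_mul_pow_le_factorial (m := N) (n := k + 1)
    rw [show N + (k + 1) = k + (N + 1) by ring] at h
    exact_mod_cast h
  have hc : (χ (k + (N + 1)) : ℝ) ≤ M := by exact_mod_cast hM _
  have hNf : (0 : ℝ) < Nat.factorial N := by exact_mod_cast Nat.factorial_pos N
  calc (Nat.factorial N : ℝ) * ((χ (k + (N + 1)) : ℝ) / (Nat.factorial (k + (N + 1)) : ℝ))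
      ≤ (Nat.factorial N : ℝ) * (M / ((Nat.factorial N : ℝ) * (N + 1) ^ (k + 1))) := by gcongr
    _ = (M : ℝ) / (N + 1) * ((N + 1 : ℝ)⁻¹) ^ k := by
      rw [inv_pow, pow_succ]
      field_simp

theorem irrational_tsum_periodic_div_factorial (χ : ℕ → ℕ) (d : ℕ) (hd : 1 ≤ d)
    (hper : ∀ n, χ (n + d) = χ n) (hne : ∃ n, χ n ≠ 0) :
    Irrational (∑' n : ℕ, (χ n : ℝ) / (Nat.factorial n : ℝ)) := by
  have hP : Function.Periodic χ d := hper
  obtain ⟨M, hM⟩ : ∃ M, ∀ n, χ n ≤ M := by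
    refine ⟨(Finset.range d).sup χ, fun n => ?_⟩
    rw [← hP.map_mod_nat n]
    exact Finset.le_sup (Finset.mem_range.2 (Nat.mod_lt _ hd))
  obtain ⟨n₀, hn₀⟩ := hne
  rintro ⟨q, hq⟩
  set N := M + 1 + q.den with hN
  have hs := summable_div_factorial_of_le χ M hM
  have hsplit := hs.sum_add_tsum_nat_add (N + 1)
  have hle := factorial_mul_tail_le χ M hM N (by omega)
  set T := ∑' k : ℕ, (χ (k + (N + 1)) : ℝ) / (Nat.factorial (k + (N + 1)) : ℝ) with hT
  have hNf : (0 : ℝ) < Nat.factorial N := by exact_mod_cast Nat.factorial_pos N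
  have hTpos : 0 < T := by
    -- The index `n₀ + (N + 1) * d ≥ N + 1` lies in the tail and carries the nonzero value `χ n₀`.
    have hk : N + 1 ≤ n₀ + (N + 1) * d := by nlinarith
    refine ((summable_nat_add_iff (N + 1)).2 hs).tsum_pos (fun k => by positivity)
      (n₀ + (N + 1) * d - (N + 1)) ?_
    rw [Nat.sub_add_cancel hk]
    have h1 : χ (n₀ + (N + 1) * d) = χ n₀ := by simpa using hP.nat_mul (N + 1) n₀
    rw [h1]
    have : 0 < χ n₀ := Nat.pos_of_ne_zero hn₀
    positivity
  have hlt : (Nat.factorial N : ℝ) * T < 1 := by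
    refine hle.trans_lt ((div_lt_one (by positivity)).2 ?_)
    exact_mod_cast (by omega : M < N)
  obtain ⟨a, ha⟩ : ∃ a : ℤ, (Nat.factorial N : ℝ) * (q : ℝ) = a := by
    obtain ⟨c, hc⟩ := Nat.dvd_factorial q.den_pos (by omega : q.den ≤ N)
    refine ⟨c * q.num, ?_⟩
    rw [hc]
    have hq' : (q.den : ℝ) * q = q.num := by exact_mod_cast q.den_mul_eq_num
    push_cast
    rw [← hq']
    ring
  obtain ⟨b, hb⟩ : ∃ b : ℤ, (Nat.factorial N : ℝ) *
      ∑ n ∈ Finset.range (N + 1), (χ n : ℝ) / (Nat.factorial n : ℝ) = b := by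
    refine ⟨∑ n ∈ Finset.range (N + 1), (χ n : ℤ) * (Nat.factorial N / Nat.factorial n : ℕ), ?_⟩
    rw [Finset.mul_sum, Int.cast_sum]
    refine Finset.sum_congr rfl fun n hn => ?_
    rw [Int.cast_mul, Int.cast_natCast, Int.cast_natCast]
    have hdvd := Nat.factorial_dvd_factorial (Nat.lt_succ_iff.1 (Finset.mem_range.1 hn))
    rw [Nat.cast_div hdvd (by exact_mod_cast Nat.factorial_ne_zero n)]
    ring
  have hab : (Nat.factorial N : ℝ) * T = ((a - b : ℤ) : ℝ) := by
    push_cast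
    rw [← ha, ← hb, hq, ← hsplit]
    ring
  have h0 : 0 < (Nat.factorial N : ℝ) * T := by positivity
  rw [hab] at h0 hlt
  have h0' : 0 < a - b := by exact_mod_cast h0
  have h1' : a - b < 1 := by exact_mod_cast hlt
  omega
end

section
/- Let M be a natural number with M ≥ 2 and let χ : ℕ → ℕ satisfy 1 ≤ χ(n) ≤ M for all n, and suppose that for every natural number b there exists n > b with χ(n) ≥ 2. Then Σ_{n=0}^∞ χ(n)/n! − e is irrational. -/
/-!
Subtracting `e = ∑ 1 / n!` termwise leaves `∑ a n / n!` with `a n = χ n - 1`, a bounded sequence of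
natural numbers that is nonzero infinitely often. Such a sum is irrational by Fourier's argument
for `e`: if it were rational with denominator `q`, then for `N ≥ q` the scaled tail
`N! * ∑_{n > N} a n / n!` would be an integer. It is positive since `a` is not eventually zero,
and if `a ≤ C` it is at most `C * ∑_{k ≥ 1} (N + 1)^(-k) = C / N`, which is below `1` once `N > C`
(`tail_lt_one`).
-/

open Nat in
theorem summable_div_factorial (C : ℕ) (a : ℕ → ℕ) (ha : ∀ n, a n ≤ C) :
    Summable (fun n ↦ (a n : ℝ) / (n ! : ℝ)) := by
  have h := (Real.summable_pow_div_factorial 1).mul_left (C : ℝ)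
  refine h.of_nonneg_of_le (fun n ↦ by positivity) (fun n ↦ ?_)
  have : (a n : ℝ) ≤ C := by exact_mod_cast ha n
  rw [one_pow, mul_one_div]
  gcongr

open Nat in
/-- The scaled tail is dominated by a geometric series of ratio `1 / (N + 1)`. -/
theorem tail_lt_one (C : ℕ) (a : ℕ → ℕ) (ha : ∀ n, a n ≤ C) (N : ℕ) (hN : C < N) :
    (N ! : ℝ) * ∑' k, (a (k + (N + 1)) : ℝ) / ((k + (N + 1))! : ℝ) < 1 := by
  have hN0 : (0 : ℝ) < N := by exact_mod_cast (Nat.zero_le C).trans_lt hN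
  have hCN : (C : ℝ) < N := by exact_mod_cast hN
  have hr : (1 : ℝ) / (N + 1) < 1 := by
    rw [div_lt_one (by positivity)]
    linarith
  have hgeom := (hasSum_geometric_of_lt_one (by positivity) hr).mul_left
    ((C : ℝ) * (1 / (N + 1)))
  have hval : (C : ℝ) * (1 / (N + 1)) * ((1 : ℝ) - 1 / (N + 1))⁻¹ = C / N := by
    have : (1 : ℝ) - 1 / (N + 1) = N / (N + 1) := by field_simp; ring
    rw [this]
    field_simp
  rw [hval] at hgeom
  have hs := (summable_nat_add_iff (N + 1)).2 (summable_div_factorial C a ha)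
  have hle := hasSum_le (fun k ↦ ?_) (hs.hasSum.mul_left (N ! : ℝ)) hgeom
  · exact hle.trans_lt ((div_lt_one hN0).2 hCN)
  have hak : (a (k + (N + 1)) : ℝ) ≤ C := by exact_mod_cast ha _
  have hfac : (N ! : ℝ) * (N + 1) ^ (k + 1) ≤ ((k + (N + 1))! : ℝ) := by
    have := Nat.factorial_mul_pow_le_factorial (m := N) (n := k + 1)
    rw [show N + (k + 1) = k + (N + 1) by ring] at this
    exact_mod_cast this
  calc (N ! : ℝ) * ((a (k + (N + 1)) : ℝ) / ((k + (N + 1))! : ℝ))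
      ≤ (N ! : ℝ) * ((C : ℝ) / ((N ! : ℝ) * (N + 1) ^ (k + 1))) := by gcongr
    _ = (C : ℝ) * (1 / (N + 1)) * (1 / (N + 1)) ^ k := by
      rw [one_div_pow]
      field_simp
      ring

open Nat in
theorem irrational_tsum_div_factorial (C : ℕ) (a : ℕ → ℕ) (ha : ∀ n, a n ≤ C)
    (htail : ∀ b : ℕ, ∃ n, b < n ∧ 0 < a n) :
    Irrational (∑' n, (a n : ℝ) / (n ! : ℝ)) := by
  rintro ⟨r, hr⟩
  have hs := summable_div_factorial C a ha
  obtain ⟨N, hN⟩ : ∃ N, N = r.den + C := ⟨_, rfl⟩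
  have hden := r.den_pos
  have hlt := tail_lt_one C a ha N (by omega)
  have hs' := (summable_nat_add_iff (N + 1)).2 hs
  have hpos : (0 : ℝ) < (N ! : ℝ) * ∑' k, (a (k + (N + 1)) : ℝ) / ((k + (N + 1))! : ℝ) := by
    obtain ⟨n, hn, han⟩ := htail N
    obtain ⟨k, rfl⟩ := Nat.exists_eq_add_of_le' (show N + 1 ≤ n from hn)
    refine mul_pos (by positivity) (hs'.tsum_pos (fun i ↦ by positivity) k ?_)
    have : (0 : ℝ) < a (k + (N + 1)) := by exact_mod_cast han
    positivity
  have hsplit := hs.sum_add_tsum_nat_add (N + 1)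
  -- `N!` clears the denominators of the partial sum up to `N` and of `r`.
  have hpartial : (N ! : ℝ) * ∑ n ∈ Finset.range (N + 1), (a n : ℝ) / (n ! : ℝ) =
      ((∑ n ∈ Finset.range (N + 1), a n * (N ! / n !) : ℕ) : ℝ) := by
    rw [Finset.mul_sum, Nat.cast_sum]
    refine Finset.sum_congr rfl fun n hn ↦ ?_
    have hd : n ! ∣ N ! := Nat.factorial_dvd_factorial (by simpa [Nat.lt_succ_iff] using hn)
    rw [Nat.cast_mul, Nat.cast_div hd (by positivity)]
    ring
  have hrat : (N ! : ℝ) * (r : ℝ) = ((r.num * (N ! / r.den : ℕ) : ℤ) : ℝ) := by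
    have hd : r.den ∣ N ! := Nat.dvd_factorial hden (by omega)
    rw [Int.cast_mul, Int.cast_natCast, Nat.cast_div hd (by positivity), Rat.cast_def]
    ring
  have hint : (N ! : ℝ) * ∑' k, (a (k + (N + 1)) : ℝ) / ((k + (N + 1))! : ℝ) =
      ((r.num * (N ! / r.den : ℕ) -
        (∑ n ∈ Finset.range (N + 1), a n * (N ! / n !) : ℕ) : ℤ) : ℝ) := by
    rw [Int.cast_sub, ← hrat, Int.cast_natCast, ← hpartial, hr, ← hsplit]
    ring
  rw [hint] at hpos hlt
  have h1 := Int.cast_pos.1 hpos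
  rw [← Int.cast_one, Int.cast_lt] at hlt
  omega

theorem irrational_tsum_sub_exp (M : ℕ) (hM : 2 ≤ M) (χ : ℕ → ℕ)
    (hbound : ∀ n, 1 ≤ χ n ∧ χ n ≤ M)
    (htail : ∀ b : ℕ, ∃ n, b < n ∧ 2 ≤ χ n) :
    Irrational ((∑' n : ℕ, (χ n : ℝ) / (Nat.factorial n : ℝ)) - Real.exp 1) := by
  have hexp : Real.exp 1 = ∑' n : ℕ, ((1 : ℕ) : ℝ) / (Nat.factorial n : ℝ) := by
    rw [Real.exp_eq_exp_ℝ, NormedSpace.exp_eq_tsum_div]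
    simp
  rw [hexp, ← (summable_div_factorial M χ fun n ↦ (hbound n).2).tsum_sub
    (summable_div_factorial 1 (fun _ ↦ 1) fun _ ↦ le_rfl)]
  have h := irrational_tsum_div_factorial M (fun n ↦ χ n - 1)
    (fun n ↦ (Nat.sub_le _ _).trans (hbound n).2) (fun b ↦ by
      obtain ⟨n, hn, h2⟩ := htail b
      exact ⟨n, hn, by omega⟩)
  simpa only [Nat.cast_sub (hbound _).1, sub_div] using h
end
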